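/- Let (Ω, ℱ, P) be a probability space, let C be a convex set of random variables that are strictly positive almost surely, and let V* ∈ C. Then the following are equivalent: (i) E[W / V*] ≤ 1 for every W ∈ C (V* is a numéraire portfolio for C); (ii) for every W ∈ C, E[(log(W/V*))⁺] ≤ E[(log(W/V*))⁻], i.e. E[log(W/V*)] ≤ 0 in the extended sense (V* is growth-optimal for C). -/

import Mathlib

open MeasureTheory Set Filter

lemma aux_log_bound {Ω : Type*} [MeasurableSpace Ω] (P : Measure Ω) [IsProbabilityMeasure P]
    (X : Ω → ℝ) (hX : Measurable X) (hpos : ∀ᵐ ω ∂P, 0 < X ω) (t : ℝ) (ht : 0 < t)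
    (h : ∫⁻ ω, ENNReal.ofReal (max (Real.log ((1 + t * X ω) / (1 + t))) 0) ∂P
      ≤ ∫⁻ ω, ENNReal.ofReal (max (-(Real.log ((1 + t * X ω) / (1 + t)))) 0) ∂P) :
    ∫⁻ ω, ENNReal.ofReal (t⁻¹ * Real.log (1 + t * X ω)) ∂P ≤ 1 := by
  have hlog : ∀ᵐ ω ∂P, Real.log ((1 + t * X ω) / (1 + t))
      = Real.log (1 + t * X ω) - Real.log (1 + t) ∧ 0 ≤ Real.log (1 + t * X ω) := by
    filter_upwards [hpos] with ω hω
    have : 0 < t * X ω := by positivity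
    exact ⟨Real.log_div (by positivity) (by positivity), Real.log_nonneg (by linarith)⟩
  have hc0 : 0 ≤ Real.log (1 + t) := Real.log_nonneg (by linarith)
  have hct : Real.log (1 + t) ≤ t := by
    have := Real.log_le_sub_one_of_pos (show 0 < 1 + t by linarith)
    linarith
  have hfin : ∫⁻ ω, ENNReal.ofReal (max (-(Real.log ((1 + t * X ω) / (1 + t)))) 0) ∂P ≠ ⊤ := by
    refine ne_top_of_le_ne_top (b := ENNReal.ofReal (Real.log (1 + t))) ENNReal.ofReal_ne_top ?_
    calc _ ≤ ∫⁻ ω, ENNReal.ofReal (Real.log (1 + t)) ∂P := by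
          apply lintegral_mono_ae
          filter_upwards [hlog] with ω hω
          apply ENNReal.ofReal_le_ofReal
          rw [hω.1]
          exact max_le (by linarith [hω.2]) hc0
      _ = _ := by simp
  have hsum : ∫⁻ ω, ENNReal.ofReal (Real.log (1 + t * X ω)) ∂P
      + ∫⁻ ω, ENNReal.ofReal (max (-(Real.log ((1 + t * X ω) / (1 + t)))) 0) ∂P
      ≤ ENNReal.ofReal t +
        ∫⁻ ω, ENNReal.ofReal (max (-(Real.log ((1 + t * X ω) / (1 + t)))) 0) ∂P := by
    calc _ = ∫⁻ ω, (ENNReal.ofReal (Real.log (1 + t * X ω))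
          + ENNReal.ofReal (max (-(Real.log ((1 + t * X ω) / (1 + t)))) 0)) ∂P := by
          rw [lintegral_add_left (by fun_prop)]
      _ ≤ ∫⁻ ω, (ENNReal.ofReal t
          + ENNReal.ofReal (max (Real.log ((1 + t * X ω) / (1 + t))) 0)) ∂P := by
          apply lintegral_mono_ae
          filter_upwards [hlog] with ω hω
          rw [← ENNReal.ofReal_add hω.2 (le_max_right _ _),
            ← ENNReal.ofReal_add ht.le (le_max_right _ _)]
          apply ENNReal.ofReal_le_ofReal
          rw [hω.1]
          rcases le_total (Real.log (1 + t * X ω) - Real.log (1 + t)) 0 with h0 | h0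
          · rw [max_eq_left (by linarith), max_eq_right h0]; linarith
          · rw [max_eq_right (by linarith), max_eq_left h0]; linarith
      _ = ENNReal.ofReal t
          + ∫⁻ ω, ENNReal.ofReal (max (Real.log ((1 + t * X ω) / (1 + t))) 0) ∂P := by
          rw [lintegral_add_left (by fun_prop)]; simp
      _ ≤ _ := by gcongr
  have hle := (ENNReal.add_le_add_iff_right hfin).1 hsum
  calc _ = ENNReal.ofReal t⁻¹ * ∫⁻ ω, ENNReal.ofReal (Real.log (1 + t * X ω)) ∂P := by
        rw [← lintegral_const_mul _ (by fun_prop)]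
        congr 1
        ext ω
        rw [ENNReal.ofReal_mul (by positivity)]
    _ ≤ ENNReal.ofReal t⁻¹ * ENNReal.ofReal t := by gcongr
    _ = 1 := by
        rw [← ENNReal.ofReal_mul (by positivity), inv_mul_cancel₀ ht.ne', ENNReal.ofReal_one]

/-- Let `C` be a convex set of a.s. strictly positive random variables
and `V* ∈ C`. Then the following are equivalent: (i) `E[W / V*] ≤ 1` for every `W ∈ C`
(`V*` is a numéraire portfolio for `C`); (ii) for every `W ∈ C`,
`E[(log(W/V*))⁺] ≤ E[(log(W/V*))⁻]`, i.e. `E[log(W/V*)] ≤ 0` in the extended sense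
(`V*` is growth-optimal for `C`). -/
theorem numeraire_iff_growth_optimal
    {Ω : Type*} [MeasurableSpace Ω] (P : Measure Ω) [IsProbabilityMeasure P]
    (C : Set (Ω → ℝ)) (hC : Convex ℝ C)
    (hCmeas : ∀ W ∈ C, Measurable W) (hCpos : ∀ W ∈ C, ∀ᵐ ω ∂P, 0 < W ω)
    (Vstar : Ω → ℝ) (hV : Vstar ∈ C) :
    (∀ W ∈ C, ∫⁻ ω, ENNReal.ofReal (W ω / Vstar ω) ∂P ≤ 1) ↔
      (∀ W ∈ C,
        ∫⁻ ω, ENNReal.ofReal (max (Real.log (W ω / Vstar ω)) 0) ∂P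
          ≤ ∫⁻ ω, ENNReal.ofReal (max (-(Real.log (W ω / Vstar ω))) 0) ∂P) := by
  have hmV := hCmeas _ hV
  constructor
  · intro h W hW
    have hmW := hCmeas _ hW
    have hsum : ∫⁻ ω, ENNReal.ofReal (max (Real.log (W ω / Vstar ω)) 0) ∂P + 1
        ≤ ∫⁻ ω, ENNReal.ofReal (max (-(Real.log (W ω / Vstar ω))) 0) ∂P + 1 := by
      calc _ = ∫⁻ ω, (ENNReal.ofReal (max (Real.log (W ω / Vstar ω)) 0) + ENNReal.ofReal 1) ∂P := by
            rw [lintegral_add_left (by fun_prop)]; simp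
        _ ≤ ∫⁻ ω, (ENNReal.ofReal (max (-(Real.log (W ω / Vstar ω))) 0)
            + ENNReal.ofReal (W ω / Vstar ω)) ∂P := by
            apply lintegral_mono_ae
            filter_upwards [hCpos _ hV, hCpos _ hW] with ω h1 h2
            have hp : 0 < W ω / Vstar ω := div_pos h2 h1
            rw [← ENNReal.ofReal_add (le_max_right _ _) zero_le_one,
              ← ENNReal.ofReal_add (le_max_right _ _) hp.le]
            apply ENNReal.ofReal_le_ofReal
            have := Real.log_le_sub_one_of_pos hp
            rcases le_total (Real.log (W ω / Vstar ω)) 0 with h0 | h0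
            · rw [max_eq_right h0, max_eq_left (by linarith)]; linarith
            · rw [max_eq_left h0, max_eq_right (by linarith)]; linarith
        _ = _ := lintegral_add_left (by fun_prop) _
        _ ≤ _ := by gcongr; exact h W hW
    exact (ENNReal.add_le_add_iff_right ENNReal.one_ne_top).1 hsum
  · intro h W hW
    have hmW := hCmeas _ hW
    have hpos : ∀ᵐ ω ∂P, 0 < W ω / Vstar ω := by
      filter_upwards [hCpos _ hV, hCpos _ hW] with ω h1 h2 using div_pos h2 h1
    have key : ∀ t : ℝ, 0 < t →
        ∫⁻ ω, ENNReal.ofReal (t⁻¹ * Real.log (1 + t * (W ω / Vstar ω))) ∂P ≤ 1 := by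
      intro t ht
      apply aux_log_bound P (fun ω => W ω / Vstar ω) (by fun_prop) hpos t ht
      have hmem : (1 / (1 + t)) • Vstar + (t / (1 + t)) • W ∈ C :=
        hC hV hW (by positivity) (by positivity) (by field_simp)
      have heq : ∀ᵐ ω ∂P, ((1 / (1 + t)) • Vstar + (t / (1 + t)) • W) ω / Vstar ω
          = (1 + t * (W ω / Vstar ω)) / (1 + t) := by
        filter_upwards [hCpos _ hV] with ω h1
        simp only [Pi.add_apply, Pi.smul_apply, smul_eq_mul]
        field_simp
      have h3 := h _ hmem
      refine le_trans (le_of_eq ?_) (h3.trans (le_of_eq ?_))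
      · exact lintegral_congr_ae (heq.mono fun ω hω => by simp only [hω])
      · exact lintegral_congr_ae (heq.mono fun ω hω => by simp only [hω])
    let f : ℕ → Ω → ENNReal := fun n ω => ENNReal.ofReal
      ((((n : ℝ) + 1)⁻¹)⁻¹ * Real.log (1 + ((n : ℝ) + 1)⁻¹ * (W ω / Vstar ω)))
    have hlim : ∀ ω, Tendsto (fun n => f n ω) atTop (nhds (ENNReal.ofReal (W ω / Vstar ω))) := by
      intro ω
      apply ENNReal.tendsto_ofReal
      have h1 := (Real.tendsto_mul_log_one_add_div_atTop (W ω / Vstar ω)).comp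
        (tendsto_atTop_add_const_right atTop (1 : ℝ) tendsto_natCast_atTop_atTop)
      refine h1.congr fun n => ?_
      simp only [Function.comp, inv_inv]
      rw [div_eq_inv_mul (W ω / Vstar ω)]
    calc _ = ∫⁻ ω, liminf (fun n => f n ω) atTop ∂P :=
          lintegral_congr fun ω => (hlim ω).liminf_eq.symm
      _ ≤ liminf (fun n => ∫⁻ ω, f n ω ∂P) atTop :=
          lintegral_liminf_le fun n => by simp only [f]; fun_prop
      _ ≤ liminf (fun _ : ℕ => (1 : ENNReal)) atTop :=
          liminf_le_liminf (Eventually.of_forall fun n => key _ (by positivity))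
      _ = 1 := by simp
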